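/- Let G be a 2-connected graph containing two vertex-disjoint 2-edge-connected subgraphs C1 and C2, a path P joining them edge-disjoint from both, and a vertex v ∉ V(C1) ∪ V(C2) joined by single edges to at least four distinct vertices in C1 and at least four distinct vertices in C2. Then G contains an immersion of K_{3,3}. -/

import Mathlib

/-- A finite multigraph without loops: vertices `V`, edges `E`,
each edge has an unordered pair of distinct endpoints. -/
structure Multigraph where
  V : Type
  E : Type
  [fV : Fintype V]
  [fE : Fintype E]
  [dV : DecidableEq V]
  [dE : DecidableEq E]
  ends : E → Sym2 V
  noLoop : ∀ e, ¬ (ends e).IsDiag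

attribute [instance] Multigraph.fV Multigraph.fE Multigraph.dV Multigraph.dE

namespace Multigraph

/-- Walks in a multigraph. -/
inductive Walk (G : Multigraph) : G.V → G.V → Type
  | nil (v : G.V) : Walk G v v
  | cons {u v w : G.V} (e : G.E) (h : G.ends e = s(u, v)) (p : Walk G v w) : Walk G u w

/-- The list of edges traversed by a walk. -/
def Walk.edges {G : Multigraph} : {u v : G.V} → G.Walk u v → List G.E
  | _, _, .nil _ => []
  | _, _, .cons e _ p => e :: p.edges

/-- The list of vertices visited by a walk. -/
def Walk.support {G : Multigraph} : {u v : G.V} → G.Walk u v → List G.V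
  | u, _, .nil _ => [u]
  | u, _, .cons _ _ p => u :: p.support

/-- A walk is a path if it visits no vertex twice. -/
def Walk.IsPath {G : Multigraph} {u v : G.V} (p : G.Walk u v) : Prop := p.support.Nodup

/-- Data of an immersion of `H` into `G`: an injective map on vertices and,
for each edge of `H`, a path in `G` joining the images of its endpoints,
the paths being pairwise edge-disjoint. -/
structure ImmersionData (H G : Multigraph) where
  vmap : H.V → G.V
  inj : Function.Injective vmap
  pstart : H.E → G.V
  pend : H.E → G.V
  walk : ∀ e, G.Walk (pstart e) (pend e)
  ends_eq : ∀ e, s(pstart e, pend e) = (H.ends e).map vmap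
  isPath : ∀ e, (walk e).IsPath
  edgeDisj : ∀ e e', e ≠ e' → List.Disjoint (walk e).edges (walk e').edges

/-- `H` immerses in `G`. -/
def Immerses (H G : Multigraph) : Prop := Nonempty (ImmersionData H G)

/-- Data witnessing that `G` contains a subdivision of `H` as a subgraph
(i.e. `H` is a topological minor of `G`): as an immersion, but moreover the
paths may only meet at images of common endpoints. -/
structure SubdivisionData (H G : Multigraph) extends ImmersionData H G where
  vtxDisj : ∀ e e', e ≠ e' → ∀ x, x ∈ (walk e).support → x ∈ (walk e').support →
    ∃ w, x = vmap w ∧ w ∈ H.ends e ∧ w ∈ H.ends e'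

/-- `G` contains a subdivision of `H` as a subgraph. -/
def ContainsSubdivision (H G : Multigraph) : Prop := Nonempty (SubdivisionData H G)

/-- The complete bipartite graph `K_{3,3}`. -/
def K33 : Multigraph where
  V := Fin 3 ⊕ Fin 3
  E := Fin 3 × Fin 3
  ends e := s(Sum.inl e.1, Sum.inr e.2)
  noLoop e := by simp [Sym2.mk_isDiag_iff]

/-- The complete graph `K_5`. -/
def K5 : Multigraph where
  V := Fin 5
  E := {p : Fin 5 × Fin 5 // p.1 < p.2}
  ends e := s(e.1.1, e.1.2)
  noLoop e := by simpa [Sym2.mk_isDiag_iff] using e.2.ne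

variable (G : Multigraph)

/-- The degree of a vertex: the number of incident edges. -/
def deg (v : G.V) : ℕ := (Finset.univ.filter fun e => v ∈ G.ends e).card

/-- The multiplicity of the (possible) edge between `u` and `v`. -/
def mult (u v : G.V) : ℕ := (Finset.univ.filter fun e => G.ends e = s(u, v)).card

/-- The edge cut determined by a set `A` of vertices. -/
def cut (A : Finset G.V) : Finset G.E :=
  Finset.univ.filter fun e => ∃ u ∈ A, ∃ v ∈ Aᶜ, G.ends e = s(u, v)

/-- Every edge cut of `G` has at least `k` edges. -/
def EdgeConnGe (k : ℕ) : Prop :=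
  ∀ A : Finset G.V, A.Nonempty → A ≠ Finset.univ → k ≤ (G.cut A).card

/-- Internally 4-edge-connected: 3-edge-connected and every 3-edge cut has a
side consisting of a single vertex. -/
def Internally4EC : Prop :=
  G.EdgeConnGe 3 ∧ ∀ A : Finset G.V, A.Nonempty → A ≠ Finset.univ →
    (G.cut A).card = 3 → A.card = 1 ∨ Aᶜ.card = 1

/-- Weakly 5-edge-connected: internally 4-edge-connected and every 4-edge cut
has a side with at most two vertices. -/
def Weakly5EC : Prop :=
  G.Internally4EC ∧ ∀ A : Finset G.V, A.Nonempty → A ≠ Finset.univ →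
    (G.cut A).card = 4 → A.card ≤ 2 ∨ Aᶜ.card ≤ 2

/-- `G` is `d`-regular. -/
def IsRegular (d : ℕ) : Prop := ∀ v, G.deg v = d

/-- `G` is connected. -/
def Connected : Prop := ∀ u v : G.V, Nonempty (G.Walk u v)

/-- `v` is a cut-vertex: the remaining vertices split into two nonempty parts
with no edge between them. -/
def IsCutVertex (v : G.V) : Prop :=
  ∃ C D : Finset G.V, C.Nonempty ∧ D.Nonempty ∧ Disjoint C D ∧ v ∉ C ∧ v ∉ D ∧
    (∀ x : G.V, x ∈ C ∪ D ∨ x = v) ∧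
    ∀ e : G.E, ¬ ∃ u ∈ C, ∃ w ∈ D, G.ends e = s(u, w)

/-- `G` is 2-connected. -/
def TwoConnected : Prop :=
  G.Connected ∧ 3 ≤ Fintype.card G.V ∧ ∀ v, ¬ G.IsCutVertex v

/-- Planarity, via Kuratowski's characterization: no subdivision of `K_5`
nor of `K_{3,3}` as a subgraph. -/
def Planar : Prop := ¬ ContainsSubdivision K5 G ∧ ¬ ContainsSubdivision K33 G

end Multigraph

namespace Multigraph

/-- The subgraph with vertex set `S` and edge set `F` is 2-edge-connected:
all edges of `F` have both ends in `S`, it is connected, and removing any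
single edge of `F` leaves it connected. -/
def TwoEdgeConnOn (G : Multigraph) (S : Finset G.V) (F : Finset G.E) : Prop :=
  S.Nonempty ∧ (∀ e ∈ F, ∀ x ∈ G.ends e, x ∈ S) ∧
  (∀ x ∈ S, ∀ y ∈ S, ∃ p : G.Walk x y, ∀ e ∈ p.edges, e ∈ F) ∧
  ∀ e0 ∈ F, ∀ x ∈ S, ∀ y ∈ S, ∃ p : G.Walk x y, ∀ e ∈ p.edges, e ∈ F ∧ e ≠ e0

end Multigraph

namespace Multigraph

namespace Walk
variable {G : Multigraph}

/-- Concatenation of walks. -/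
def append : {u v w : G.V} → G.Walk u v → G.Walk v w → G.Walk u w
  | _, _, _, .nil _, q => q
  | _, _, _, .cons e h p, q => .cons e h (p.append q)

theorem edges_append {u v w : G.V} (p : G.Walk u v) (q : G.Walk v w) :
    (p.append q).edges = p.edges ++ q.edges := by
  induction p with
  | nil => simp [append, edges]
  | cons e h p ih => simp [append, edges, ih]

/-- Reversal of walks. -/
def reverse : {u v : G.V} → G.Walk u v → G.Walk v u
  | _, _, .nil v => .nil v
  | _, _, .cons e h p => p.reverse.append (.cons e (h.trans Sym2.eq_swap) (.nil _))

theorem edges_reverse {u v : G.V} (p : G.Walk u v) :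
    p.reverse.edges = p.edges.reverse := by
  induction p with
  | nil => simp [reverse, edges]
  | cons e h p ih => simp [reverse, edges, edges_append, ih]

/-- A vertex lies on a walk. -/
def On {u v : G.V} (p : G.Walk u v) (z : G.V) : Prop :=
  z = u ∨ ∃ e ∈ p.edges, z ∈ G.ends e

theorem on_cons {u v w : G.V} (e : G.E) (h : G.ends e = s(u, v)) (p : G.Walk v w) (z : G.V) :
    (cons e h p).On z ↔ z = u ∨ p.On z := by
  simp only [On, edges, List.mem_cons, exists_eq_or_imp, h, Sym2.mem_iff]
  tauto

theorem on_iff_mem_support {u v : G.V} (p : G.Walk u v) (z : G.V) :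
    p.On z ↔ z ∈ p.support := by
  induction p with
  | nil => simp [On, edges, support]
  | cons e h p ih => rw [on_cons, ih]; simp [support]

theorem split {u v : G.V} (p : G.Walk u v) {z : G.V} (hz : p.On z) :
    ∃ (q : G.Walk u z) (r : G.Walk z v), p.edges = q.edges ++ r.edges := by
  induction p with
  | nil => 
    obtain rfl | h := hz
    · exact ⟨.nil _, .nil _, rfl⟩
    · simp [edges] at h
  | @cons u v w e h p ih =>
    rw [on_cons] at hz
    obtain rfl | hz := hz
    · exact ⟨.nil _, .cons e h p, rfl⟩
    · obtain ⟨q, r, hqr⟩ := ih hz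
      exact ⟨.cons e h q, r, by simp [edges, hqr]⟩

theorem exists_path {u v : G.V} (p : G.Walk u v) :
    ∃ q : G.Walk u v, q.IsPath ∧ ∀ e ∈ q.edges, e ∈ p.edges := by
  suffices H : ∀ n, ∀ (u v : G.V) (p : G.Walk u v), p.edges.length ≤ n →
      ∃ q : G.Walk u v, q.IsPath ∧ ∀ e ∈ q.edges, e ∈ p.edges from H _ u v p le_rfl
  intro n
  induction n with
  | zero =>
    intro u v p hp
    cases p with
    | nil => exact ⟨.nil _, by simp [IsPath, support], by simp⟩
    | cons e h p => simp [edges] at hp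
  | succ n ih =>
    intro u v p hp
    cases p with
    | nil => exact ⟨.nil _, by simp [IsPath, support], by simp⟩
    | cons e h p =>
      simp only [edges, List.length_cons, Nat.add_le_add_iff_right] at hp
      by_cases hu : p.On u
      · obtain ⟨q, r, hqr⟩ := p.split hu
        obtain ⟨q', hq', hs⟩ := ih _ _ r (by rw [hqr] at hp; simp at hp; omega)
        refine ⟨q', hq', fun e he => ?_⟩
        have := hs e he
        simp [edges, hqr, this]
      · obtain ⟨q', hq', hs⟩ := ih _ _ p hp
        by_cases hu' : q'.On u
        · obtain rfl | ⟨e', he', hue⟩ := hu'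
          · exact absurd (Or.inl rfl) hu
          · exact absurd (Or.inr ⟨e', hs _ he', hue⟩) hu
        · refine ⟨.cons e h q', ?_, ?_⟩
          · rw [on_iff_mem_support] at hu'
            simp only [IsPath, support, List.nodup_cons]
            exact ⟨hu', hq'⟩
          · intro f hf
            simp only [edges, List.mem_cons] at hf ⊢
            exact hf.imp id (hs f)

theorem IsPath.nodup_edges {u v : G.V} {p : G.Walk u v} (hp : p.IsPath) : p.edges.Nodup := by
  induction p with
  | nil => simp [edges]
  | cons e h p ih =>
    simp only [IsPath, support, List.nodup_cons] at hp
    simp only [edges, List.nodup_cons]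
    refine ⟨fun he => hp.1 ?_, ih hp.2⟩
    rw [← on_iff_mem_support]
    exact Or.inr ⟨e, he, by simp [h]⟩

/-- First hit of a set of vertices. -/
theorem first_hit {u v : G.V} (p : G.Walk u v) (X : Set G.V) (hv : v ∈ X) :
    ∃ r ∈ X, ∃ q : G.Walk u r, (∀ e ∈ q.edges, e ∈ p.edges) ∧
      ∀ e ∈ q.edges, ∃ x ∈ G.ends e, x ∉ X := by
  induction p with
  | nil => exact ⟨_, hv, .nil _, by simp [edges], by simp [edges]⟩
  | @cons u v w e h p ih =>
    by_cases hu : u ∈ X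
    · exact ⟨_, hu, .nil _, by simp [edges], by simp [edges]⟩
    · obtain ⟨r, hr, q, hq1, hq2⟩ := ih hv
      refine ⟨r, hr, .cons e h q, ?_, ?_⟩
      · intro f hf
        simp only [edges, List.mem_cons] at hf ⊢
        exact hf.imp id (hq1 f)
      · intro f hf
        simp only [edges, List.mem_cons] at hf
        obtain rfl | hf := hf
        · exact ⟨u, by simp [h], hu⟩
        · exact hq2 f hf

end Walk

/-- Some edge of `s` is incident with `z`. -/
def Inc (G : Multigraph) (s : Finset G.E) (z : G.V) : Prop := ∃ e ∈ s, z ∈ G.ends e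

theorem inc_union {G : Multigraph} (s t : Finset G.E) (z : G.V) :
    G.Inc (s ∪ t) z ↔ G.Inc s z ∨ G.Inc t z := by
  simp only [Inc, Finset.mem_union, or_and_right, exists_or]

/-- `s` is the edge set of a trail from `u` to `v`. -/
def Seg (G : Multigraph) (s : Finset G.E) (u v : G.V) : Prop :=
  ∃ p : G.Walk u v, p.edges.Nodup ∧ p.edges.toFinset = s

section
variable {G : Multigraph} {s t : Finset G.E} {u v w z : G.V}

theorem Seg.nil (u : G.V) : G.Seg ∅ u u := ⟨.nil u, by simp [Walk.edges], by simp [Walk.edges]⟩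

theorem Seg.symm (h : G.Seg s u v) : G.Seg s v u := by
  obtain ⟨p, h1, h2⟩ := h
  exact ⟨p.reverse, by simpa [Walk.edges_reverse] using h1, by simpa [Walk.edges_reverse] using h2⟩

theorem Seg.trans (h : G.Seg s u v) (h' : G.Seg t v w) (hd : Disjoint s t) :
    G.Seg (s ∪ t) u w := by
  obtain ⟨p, h1, rfl⟩ := h
  obtain ⟨q, h3, rfl⟩ := h'
  refine ⟨p.append q, ?_, by simp [Walk.edges_append]⟩
  rw [Walk.edges_append, List.nodup_append']
  refine ⟨h1, h3, ?_⟩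
  simpa [Finset.disjoint_left, List.Disjoint] using hd

theorem Seg.split (h : G.Seg s u v) (hz : z = u ∨ G.Inc s z) :
    ∃ s1 s2, s = s1 ∪ s2 ∧ Disjoint s1 s2 ∧ G.Seg s1 u z ∧ G.Seg s2 z v := by
  obtain ⟨p, h1, rfl⟩ := h
  obtain ⟨q, r, hqr⟩ := p.split (z := z) (by simpa [Walk.On, Inc] using hz)
  rw [hqr, List.nodup_append'] at h1
  refine ⟨_, _, by rw [hqr, List.toFinset_append], ?_, ⟨q, h1.1, rfl⟩, ⟨r, h1.2.1, rfl⟩⟩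
  simpa [Finset.disjoint_left, List.Disjoint] using h1.2.2

theorem Seg.inc_mem {S : Finset G.V} {F : Finset G.E} (hF : ∀ e ∈ F, ∀ x ∈ G.ends e, x ∈ S)
    (hs : s ⊆ F) (hz : G.Inc s z) : z ∈ S := by
  obtain ⟨e, he, hz⟩ := hz
  exact hF e (hs he) z hz

end

/-- Two edge-disjoint walks from `c` to the set `W`. -/
def Two (G : Multigraph) (F : Finset G.E) (W : Set G.V) (c : G.V) : Prop :=
  ∃ z ∈ W, ∃ w ∈ W, ∃ (q1 : G.Walk c z) (q2 : G.Walk c w),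
    (∀ e ∈ q1.edges, e ∈ F ∧ ∃ x ∈ G.ends e, x ∉ W) ∧
    (∀ e ∈ q2.edges, e ∈ F ∧ ∃ x ∈ G.ends e, x ∉ W) ∧
    List.Disjoint q1.edges q2.edges

theorem two_aux {G : Multigraph} {F : Finset G.E} {W : Set G.V} {c c' : G.V} {e : G.E}
    (he : G.ends e = s(c, c')) (heF : e ∈ F) (hc : c ∉ W) {z w : G.V} (hz : z ∈ W) (hw : w ∈ W)
    (q1 : G.Walk c' z) (q2 : G.Walk c' w) (hp1 : q1.IsPath)
    (h1 : ∀ e ∈ q1.edges, e ∈ F ∧ ∃ x ∈ G.ends e, x ∉ W)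
    (h2 : ∀ e ∈ q2.edges, e ∈ F ∧ ∃ x ∈ G.ends e, x ∉ W)
    (hd : List.Disjoint q1.edges q2.edges) (heq : e ∈ q1.edges) : G.Two F W c := by
  cases q1 with
  | nil => simp [Walk.edges] at heq
  | @cons _ d _ f hf rest =>
    have hne : e ∉ rest.edges := by
      intro h
      simp only [Walk.IsPath, Walk.support, List.nodup_cons, ← Walk.on_iff_mem_support] at hp1
      exact hp1.1 (Or.inr ⟨e, h, by simp [he]⟩)
    simp only [Walk.edges, List.mem_cons, hne, or_false] at heq
    subst heq
    have : d = c := by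
      rw [hf] at he
      have hcc : c ≠ c' := by
        rintro rfl
        exact G.noLoop e (by rw [hf, he]; simp)
      simp only [Sym2.eq_iff] at he
      rcases he with ⟨h, h'⟩ | ⟨h, h'⟩
      · exact absurd h.symm hcc
      · exact h'
    subst this
    simp only [Walk.edges, List.disjoint_cons_left] at hd
    refine ⟨z, hz, w, hw, rest, .cons e he q2, ?_, ?_, ?_⟩
    · intro g hg
      exact h1 g (by simp [Walk.edges, hg])
    · intro g hg
      simp only [Walk.edges, List.mem_cons] at hg
      obtain rfl | hg := hg
      · exact ⟨heF, d, by simp [he], hc⟩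
      · exact h2 g hg
    · simp only [Walk.edges, List.disjoint_cons_right]
      exact ⟨hne, hd.2⟩

theorem Two.swap_paths {G : Multigraph} {F : Finset G.E} {W : Set G.V} {c : G.V}
    (h : G.Two F W c) : ∃ z ∈ W, ∃ w ∈ W, ∃ (q1 : G.Walk c z) (q2 : G.Walk c w),
    q1.IsPath ∧ q2.IsPath ∧
    (∀ e ∈ q1.edges, e ∈ F ∧ ∃ x ∈ G.ends e, x ∉ W) ∧
    (∀ e ∈ q2.edges, e ∈ F ∧ ∃ x ∈ G.ends e, x ∉ W) ∧
    List.Disjoint q1.edges q2.edges := by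
  obtain ⟨z, hz, w, hw, q1, q2, h1, h2, h3⟩ := h
  obtain ⟨r1, hr1, hs1⟩ := q1.exists_path
  obtain ⟨r2, hr2, hs2⟩ := q2.exists_path
  exact ⟨z, hz, w, hw, r1, r2, hr1, hr2, fun e he => h1 e (hs1 e he), fun e he => h2 e (hs2 e he),
    fun e he he' => h3 (hs1 e he) (hs2 e he')⟩

theorem two_aux2 {G : Multigraph} {F : Finset G.E} {W : Set G.V} {c c' r : G.V} {e : G.E}
    (he : G.ends e = s(c, c')) (heF : e ∈ F) (hc : c ∉ W) {z w : G.V} (hz : z ∈ W) (hw : w ∈ W)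
    (q1 : G.Walk c' z) (q2 : G.Walk c' w)
    (h1 : ∀ e ∈ q1.edges, e ∈ F ∧ ∃ x ∈ G.ends e, x ∉ W)
    (h2 : ∀ e ∈ q2.edges, e ∈ F ∧ ∃ x ∈ G.ends e, x ∉ W)
    (hd : List.Disjoint q1.edges q2.edges) (he1 : e ∉ q1.edges)
    (R : G.Walk c r) (hR : ∀ e ∈ R.edges, e ∈ F ∧ ∃ x ∈ G.ends e, x ∉ W) (heR : e ∉ R.edges)
    (hR2 : List.Disjoint R.edges q2.edges) (hr : r ∈ W ∨ q1.On r) : G.Two F W c := by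
  obtain ⟨z', hz', q, hq1, hq2⟩ : ∃ z' ∈ W, ∃ q : G.Walk r z',
      (∀ f ∈ q.edges, f ∈ q1.edges) ∧ True := by
    obtain hr | hr := hr
    · exact ⟨r, hr, .nil _, by simp [Walk.edges], trivial⟩
    · obtain ⟨a, b, hab⟩ := q1.split hr
      exact ⟨z, hz, b, fun f hf => by simp [hab, hf], trivial⟩
  refine ⟨z', hz', w, hw, R.append q, .cons e he q2, ?_, ?_, ?_⟩
  · intro f hf
    rw [Walk.edges_append, List.mem_append] at hf
    exact hf.elim (hR f) (fun h => h1 f (hq1 f h))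
  · intro g hg
    simp only [Walk.edges, List.mem_cons] at hg
    obtain rfl | hg := hg
    · exact ⟨heF, c, by simp [he], hc⟩
    · exact h2 g hg
  · simp only [Walk.edges, List.disjoint_cons_right, Walk.edges_append, List.mem_append,
      List.disjoint_append_left]
    exact ⟨fun h => h.elim heR (fun h => he1 (hq1 e h)), hR2, fun f hf hf' => hd (hq1 f hf) hf'⟩

theorem two_of_walk {G : Multigraph} {S : Finset G.V} {F : Finset G.E}
    (hC : G.TwoEdgeConnOn S F) {W : Set G.V} {c w0 : G.V} (hw0 : w0 ∈ W) (hw0S : w0 ∈ S)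
    (p : G.Walk c w0) (hp : ∀ e ∈ p.edges, e ∈ F) : G.Two F W c := by
  induction p with
  | nil v => exact ⟨v, hw0, v, hw0, .nil v, .nil v, by simp [Walk.edges], by simp [Walk.edges],
      by simp [Walk.edges]⟩
  | @cons c c' w0 e he p ih =>
    by_cases hc : c ∈ W
    · exact ⟨c, hc, c, hc, .nil c, .nil c, by simp [Walk.edges], by simp [Walk.edges],
        by simp [Walk.edges]⟩
    have heF : e ∈ F := hp e (by simp [Walk.edges])
    obtain ⟨z, hz, w, hw, q1, q2, hp1, hp2, h1, h2, hd⟩ :=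
      (ih hw0 hw0S (fun f hf => hp f (by simp [Walk.edges, hf]))).swap_paths
    by_cases he1 : e ∈ q1.edges
    · exact two_aux he heF hc hz hw q1 q2 hp1 h1 h2 hd he1
    by_cases he2 : e ∈ q2.edges
    · exact two_aux he heF hc hw hz q2 q1 hp2 h2 h1 hd.symm he2
    obtain ⟨R, hR⟩ := hC.2.2.2 e heF c (hC.2.1 e heF c (by simp [he])) w0 hw0S
    obtain ⟨r, hr, R', hR1, hR2⟩ := R.first_hit {x | x ∈ W ∨ q1.On x ∨ q2.On x} (Or.inl hw0)
    have hR3 : ∀ e ∈ R'.edges, e ∈ F ∧ ∃ x ∈ G.ends e, x ∉ W := by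
      intro f hf
      obtain ⟨x, hx, hx'⟩ := hR2 f hf
      exact ⟨(hR f (hR1 f hf)).1, x, hx, fun h => hx' (Or.inl h)⟩
    have heR : e ∉ R'.edges := fun h => (hR e (hR1 e h)).2 rfl
    have hd1 : List.Disjoint R'.edges q1.edges := by
      intro f hf hf'
      obtain ⟨x, hx, hx'⟩ := hR2 f hf
      exact hx' (Or.inr (Or.inl (Or.inr ⟨f, hf', hx⟩)))
    have hd2 : List.Disjoint R'.edges q2.edges := by
      intro f hf hf'
      obtain ⟨x, hx, hx'⟩ := hR2 f hf
      exact hx' (Or.inr (Or.inr (Or.inr ⟨f, hf', hx⟩)))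
    rcases hr with hr | hr | hr
    · exact two_aux2 he heF hc hz hw q1 q2 h1 h2 hd he1 R' hR3 heR hd2 (Or.inl hr)
    · exact two_aux2 he heF hc hz hw q1 q2 h1 h2 hd he1 R' hR3 heR hd2 (Or.inr hr)
    · exact two_aux2 he heF hc hw hz q2 q1 h2 h1 hd.symm he2 R' hR3 heR hd1 (Or.inr hr)

/-- The ear lemma. -/
theorem ear {G : Multigraph} {S : Finset G.V} {F : Finset G.E}
    (hC : G.TwoEdgeConnOn S F) {c w0 : G.V} (hc : c ∈ S) (hw0 : w0 ∈ S) (D : Finset G.E) :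
    ∃ z w r1 r2, (z = w0 ∨ G.Inc D z) ∧ (w = w0 ∨ G.Inc D w) ∧ G.Seg r1 c z ∧ G.Seg r2 c w ∧
      r1 ⊆ F ∧ r2 ⊆ F ∧ Disjoint r1 r2 ∧ Disjoint r1 D ∧ Disjoint r2 D := by
  obtain ⟨p, hp⟩ := hC.2.2.1 c hc w0 hw0
  obtain ⟨z, hz, w, hw, q1, q2, hp1, hp2, h1, h2, hd⟩ :=
    (two_of_walk hC (W := {x | x = w0 ∨ G.Inc D x}) (Or.inl rfl) hw0 p hp).swap_paths
  refine ⟨z, w, _, _, hz, hw, ⟨q1, hp1.nodup_edges, rfl⟩, ⟨q2, hp2.nodup_edges, rfl⟩, ?_, ?_, ?_,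
    ?_, ?_⟩
  · intro e he; exact (h1 e (by simpa using he)).1
  · intro e he; exact (h2 e (by simpa using he)).1
  · simpa [Finset.disjoint_left, List.Disjoint] using hd
  · rw [Finset.disjoint_left]
    intro e he he'
    obtain ⟨x, hx, hx'⟩ := (h1 e (by simpa using he)).2
    exact hx' (Or.inr ⟨e, he', hx⟩)
  · rw [Finset.disjoint_left]
    intro e he he'
    obtain ⟨x, hx, hx'⟩ := (h2 e (by simpa using he)).2
    exact hx' (Or.inr ⟨e, he', hx⟩)

end Multigraph
set_option linter.unusedSimpArgs false
namespace Multigraph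
section
variable {G : Multigraph}

/-- A trail inside `F` starting at `p` and visiting `a`, `b`, `c` in some order. -/
def Star (G : Multigraph) (F : Finset G.E) (p a b c : G.V) : Prop :=
  ∃ s1 s2 s3 D1 D2 D3, [s1, s2, s3].Perm [a, b, c] ∧ G.Seg D1 p s1 ∧ G.Seg D2 s1 s2 ∧
    G.Seg D3 s2 s3 ∧ D1 ⊆ F ∧ D2 ⊆ F ∧ D3 ⊆ F ∧ [D1, D2, D3].Pairwise Disjoint

theorem Star.perm {F : Finset G.E} {p a b c a' b' c' : G.V} (h : G.Star F p a b c)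
    (hp : [a, b, c].Perm [a', b', c']) : G.Star F p a' b' c' := by
  obtain ⟨s1, s2, s3, D1, D2, D3, h1, h2⟩ := h
  exact ⟨s1, s2, s3, D1, D2, D3, h1.trans hp, h2⟩

theorem star7 {F X1 X2 X3 X4 X5 X6 X7 : Finset G.E} {p a b c u1 u2 u3 u4 : G.V}
    (h1 : G.Seg X1 p u1) (h2 : G.Seg X2 u1 a) (h3 : G.Seg X3 a u2) (h4 : G.Seg X4 u2 u3)
    (h5 : G.Seg X5 u3 b) (h6 : G.Seg X6 b u4) (h7 : G.Seg X7 u4 c)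
    (hd : [X1, X2, X3, X4, X5, X6, X7].Pairwise Disjoint)
    (hs : ∀ X ∈ [X1, X2, X3, X4, X5, X6, X7], X ⊆ F) : G.Star F p a b c := by
  simp only [List.pairwise_cons, List.mem_cons, forall_eq_or_imp, List.not_mem_nil,
    IsEmpty.forall_iff, implies_true, List.Pairwise.nil, and_true] at hd hs
  refine ⟨a, b, c, _, _, _, .refl _, h1.trans h2 ?_, (h3.trans h4 ?_).trans h5 ?_,
    h6.trans h7 ?_, ?_, ?_, ?_, ?_⟩
  all_goals simp [Finset.disjoint_union_left, Finset.disjoint_union_right,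
    Finset.union_subset_iff, hd, hs]


/-- Inserting a vertex with an ear into a trail. -/
theorem seg_insert {U R1 R2 : Finset G.E} {u v c z w : G.V} (h : G.Seg U u v)
    (hr1 : G.Seg R1 c z) (hr2 : G.Seg R2 c w) (hd : [U, R1, R2].Pairwise Disjoint)
    (hz : z = u ∨ G.Inc U z) (hw : w = u ∨ G.Inc U w) :
    ∃ V1 V2, G.Seg V1 u c ∧ G.Seg V2 c v ∧ Disjoint V1 V2 ∧ V1 ⊆ U ∪ R1 ∪ R2 ∧
      V2 ⊆ U ∪ R1 ∪ R2 := by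
  obtain ⟨Y1, Y2, rfl, hY, h1, h2⟩ := h.split hz
  have hw' : (w = u ∨ G.Inc Y1 w) ∨ (w = z ∨ G.Inc Y2 w) := by
    rw [inc_union] at hw; tauto
  simp only [List.pairwise_cons, List.mem_cons, forall_eq_or_imp, List.not_mem_nil,
    IsEmpty.forall_iff, implies_true, List.Pairwise.nil, and_true, Finset.disjoint_union_left,
    Finset.disjoint_union_right] at hd
  obtain hw | hw := hw'
  · obtain ⟨Z1, Z2, rfl, hZ, h3, h4⟩ := h1.split hw
    simp only [Finset.disjoint_union_left, Finset.disjoint_union_right] at hd hY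
    refine ⟨_, _, h3.trans hr2.symm ?_, hr1.trans h2 ?_, ?_, ?_, ?_⟩
    · simp [hd]
    · simp_all [disjoint_comm]
    · simp_all [Finset.disjoint_union_left, Finset.disjoint_union_right, disjoint_comm]
    · grind
    · grind
  · obtain ⟨Z1, Z2, rfl, hZ, h3, h4⟩ := h2.split hw
    simp only [Finset.disjoint_union_left, Finset.disjoint_union_right] at hd hY
    refine ⟨_, _, h1.trans hr1.symm ?_, hr2.trans h4 ?_, ?_, ?_, ?_⟩
    · simp [hd]
    · simp_all [disjoint_comm]
    · simp_all [Finset.disjoint_union_left, Finset.disjoint_union_right, disjoint_comm]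
    · grind
    · grind

theorem star_tri1 {F U1 U2 U3 R : Finset G.E} {p a b c z : G.V}
    (h1 : G.Seg U1 p a) (h2 : G.Seg U2 a b) (h3 : G.Seg U3 b p) (hr : G.Seg R c z)
    (hd : [U1, U2, U3, R].Pairwise Disjoint)
    (hs : ∀ X ∈ [U1, U2, U3, R], X ⊆ F) (hz : z = b ∨ G.Inc U3 z) :
    G.Star F p a b c := by
  obtain ⟨Y1, Y2, rfl, hY, h4, h5⟩ := h3.split hz
  refine star7 (.nil p) h1 h2 (.nil b) (.nil b) h4 hr.symm ?_ ?_
  · simp_all [Finset.disjoint_union_left, Finset.disjoint_union_right]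
  · simp_all [Finset.union_subset_iff]

theorem star_comp {F U1 U2 U3 : Finset G.E} {p a b c : G.V}
    (h1 : G.Seg U1 p a) (h2 : G.Seg U2 a b) (h3 : G.Seg U3 b c)
    (hd : [U1, U2, U3].Pairwise Disjoint)
    (hs : ∀ X ∈ [U1, U2, U3], X ⊆ F) : G.Star F p a b c := by
  simp at hs
  exact ⟨a, b, c, U1, U2, U3, .refl _, h1, h2, h3, hs.1, hs.2.1, hs.2.2, hd⟩

/-- Case: an ear attached to a triangle. -/
theorem star_tri {F U1 U2 U3 R1 R2 : Finset G.E} {p a b c z w : G.V}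
    (h1 : G.Seg U1 p a) (h2 : G.Seg U2 a b) (h3 : G.Seg U3 b p)
    (hr1 : G.Seg R1 c z) (hr2 : G.Seg R2 c w)
    (hd : [U1, U2, U3, R1, R2].Pairwise Disjoint)
    (hs : ∀ X ∈ [U1, U2, U3, R1, R2], X ⊆ F)
    (hz : z = a ∨ G.Inc (U1 ∪ U2 ∪ U3) z) (hw : w = a ∨ G.Inc (U1 ∪ U2 ∪ U3) w) :
    G.Star F p a b c := by
  simp only [inc_union] at hz hw
  have key : ∀ R z, (R = R1 ∨ R = R2) → G.Seg R c z → (z = a ∨ G.Inc U1 z) ∨ G.Inc U3 z →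
      G.Star F p a b c := by
    rintro R z hR h (hz | hz)
    · refine Star.perm (star_tri1 h3.symm h2.symm h1.symm h ?_ ?_ hz) (List.Perm.swap _ _ _)
      · obtain rfl | rfl := hR <;> simp_all [disjoint_comm]
      · obtain rfl | rfl := hR <;> simp_all
    · refine star_tri1 h1 h2 h3 h ?_ ?_ (Or.inr hz)
      · obtain rfl | rfl := hR <;> simp_all
      · obtain rfl | rfl := hR <;> simp_all
  by_cases hz1 : (z = a ∨ G.Inc U1 z) ∨ G.Inc U3 z
  · exact key _ _ (Or.inl rfl) hr1 hz1
  by_cases hw1 : (w = a ∨ G.Inc U1 w) ∨ G.Inc U3 w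
  · exact key _ _ (Or.inr rfl) hr2 hw1
  have hz2 : G.Inc U2 z := by tauto
  have hw2 : G.Inc U2 w := by tauto
  obtain ⟨V1, V2, hV1, hV2, hV, hs1, hs2⟩ := seg_insert h2 hr1 hr2 (by simp_all)
    (Or.inr hz2) (Or.inr hw2)
  refine Star.perm (star_comp h1 hV1 hV2 ?_ ?_) ((List.Perm.swap _ _ _).cons _)
  · have : Disjoint U1 (U2 ∪ R1 ∪ R2) := by simp_all [Finset.disjoint_union_right]
    have := this.mono_right hs1
    have := Disjoint.mono_right hs2 ‹Disjoint U1 (U2 ∪ R1 ∪ R2)›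
    simp_all
  · have : U2 ∪ R1 ∪ R2 ⊆ F := by simp_all [Finset.union_subset_iff]
    have := hs1.trans this
    have := hs2.trans ‹U2 ∪ R1 ∪ R2 ⊆ F›
    simp_all

theorem star_theta1 {F A1 B1 B2 C1 C2 R : Finset G.E} {p a b c x y z : G.V}
    (hA1 : G.Seg A1 x p) (hB1 : G.Seg B1 x a) (hB2 : G.Seg B2 y a) (hC1 : G.Seg C1 x b)
    (hC2 : G.Seg C2 y b) (hr : G.Seg R c z)
    (hd : [A1, B1, B2, C1, C2, R].Pairwise Disjoint)
    (hs : ∀ X ∈ [A1, B1, B2, C1, C2, R], X ⊆ F) (hz : z = x ∨ G.Inc B1 z) :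
    G.Star F p a b c := by
  obtain ⟨Y1, Y2, rfl, hY, h4, h5⟩ := hB1.split hz
  refine Star.perm (star7 hA1.symm hC1 hC2.symm (.nil _) hB2 h5.symm hr.symm ?_ ?_)
    (List.Perm.swap _ _ _)
  · simp_all [Finset.disjoint_union_left, Finset.disjoint_union_right, disjoint_comm]
  · simp_all [Finset.union_subset_iff]

theorem star_theta2 {F A1 B1 B2 C1 C2 R1 R2 : Finset G.E} {p a b c x y z w : G.V}
    (hA1 : G.Seg A1 x p) (hB1 : G.Seg B1 x a) (hB2 : G.Seg B2 y a)
    (hC2 : G.Seg C2 y b) (hr1 : G.Seg R1 c z) (hr2 : G.Seg R2 c w)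
    (hd : [A1, B1, B2, C1, C2, R1, R2].Pairwise Disjoint)
    (hs : ∀ X ∈ [A1, B1, B2, C1, C2, R1, R2], X ⊆ F) (hz : G.Inc A1 z)
    (hw : G.Inc A1 w) : G.Star F p a b c := by
  obtain ⟨V1, V2, hV1, hV2, hV, hs1, hs2⟩ := seg_insert hA1 hr1 hr2 (by simp_all)
    (Or.inr hz) (Or.inr hw)
  have hF : A1 ∪ R1 ∪ R2 ⊆ F := by simp_all [Finset.union_subset_iff]
  have hF1 := hs1.trans hF
  have hF2 := hs2.trans hF
  have hD : ∀ Z, Disjoint A1 Z → Disjoint R1 Z → Disjoint R2 Z →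
      Disjoint V1 Z ∧ Disjoint V2 Z := by
    intro Z h1 h2 h3
    have : Disjoint (A1 ∪ R1 ∪ R2) Z := by simp [Finset.disjoint_union_left, h1, h2, h3]
    exact ⟨this.mono_left hs1, this.mono_left hs2⟩
  clear hs1 hs2
  have hB1d := hD B1 (by simp_all) (by simp_all [disjoint_comm]) (by simp_all [disjoint_comm])
  have hB2d := hD B2 (by simp_all) (by simp_all [disjoint_comm]) (by simp_all [disjoint_comm])
  have hC2d := hD C2 (by simp_all) (by simp_all [disjoint_comm]) (by simp_all [disjoint_comm])
  clear hD
  refine Star.perm (star7 (.nil p) hV2.symm hV1.symm (.nil _) hB1 hB2.symm hC2 ?_ ?_)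
    (b' := b) (c' := c) ?_
  · simp_all [disjoint_comm]
  · simp_all
  · exact (List.Perm.swap _ _ _).trans ((List.Perm.swap _ _ _).cons _)

set_option maxHeartbeats 1000000 in
/-- Case: an ear attached to a theta. -/
theorem star_theta {F A1 A2 B1 B2 C1 C2 R1 R2 : Finset G.E} {p a b c x y z w : G.V}
    (hA1 : G.Seg A1 x p) (hA2 : G.Seg A2 y p) (hB1 : G.Seg B1 x a) (hB2 : G.Seg B2 y a)
    (hC1 : G.Seg C1 x b) (hC2 : G.Seg C2 y b) (hr1 : G.Seg R1 c z) (hr2 : G.Seg R2 c w)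
    (hd : [A1, A2, B1, B2, C1, C2, R1, R2].Pairwise Disjoint)
    (hs : ∀ X ∈ [A1, A2, B1, B2, C1, C2, R1, R2], X ⊆ F)
    (hz : z = x ∨ G.Inc (A1 ∪ A2 ∪ B1 ∪ B2 ∪ C1 ∪ C2) z)
    (hw : w = x ∨ G.Inc (A1 ∪ A2 ∪ B1 ∪ B2 ∪ C1 ∪ C2) w) :
    G.Star F p a b c := by
  simp only [inc_union] at hz hw
  have key : ∀ R z, (R = R1 ∨ R = R2) → G.Seg R c z →
      ((z = x ∨ G.Inc B1 z) ∨ G.Inc B2 z ∨ G.Inc C1 z ∨ G.Inc C2 z) →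
      G.Star F p a b c := by
    rintro R z hR h (hz | hz | hz | hz)
    · refine star_theta1 hA1 hB1 hB2 hC1 hC2 h ?_ ?_ hz
      · obtain rfl | rfl := hR <;> simp_all
      · obtain rfl | rfl := hR <;> simp_all
    · refine star_theta1 hA2 hB2 hB1 hC2 hC1 h ?_ ?_ (Or.inr hz)
      · obtain rfl | rfl := hR <;> simp_all [disjoint_comm]
      · obtain rfl | rfl := hR <;> simp_all
    · refine Star.perm (star_theta1 hA1 hC1 hC2 hB1 hB2 h ?_ ?_ (Or.inr hz))
        (List.Perm.swap _ _ _)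
      · obtain rfl | rfl := hR <;> simp_all [disjoint_comm]
      · obtain rfl | rfl := hR <;> simp_all
    · refine Star.perm (star_theta1 hA2 hC2 hC1 hB2 hB1 h ?_ ?_ (Or.inr hz))
        (List.Perm.swap _ _ _)
      · obtain rfl | rfl := hR <;> simp_all [disjoint_comm]
      · obtain rfl | rfl := hR <;> simp_all
  have mixed : ∀ R R' z w, (R = R1 ∧ R' = R2 ∨ R = R2 ∧ R' = R1) → G.Seg R c z → G.Seg R' c w →
      G.Inc A1 z → G.Inc A2 w → G.Star F p a b c := by
    clear hz hw key
    intro R R' z w hR h h' hz hw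
    obtain ⟨Y1, Y2, rfl, hY, h4, h5⟩ := hA1.split (Or.inr hz)
    obtain ⟨Z1, Z2, rfl, hZ, h6, h7⟩ := hA2.split (Or.inr hw)
    clear hz hw hA1 hA2
    refine Star.perm (star7 h5.symm h.symm h' h6.symm hB2 hB1.symm hC1 ?_ ?_)
      (b' := b) (c' := c) ?_
    · obtain ⟨rfl, rfl⟩ | ⟨rfl, rfl⟩ := hR <;>
        simp_all [Finset.disjoint_union_left, Finset.disjoint_union_right, disjoint_comm]
    · obtain ⟨rfl, rfl⟩ | ⟨rfl, rfl⟩ := hR <;> simp_all [Finset.union_subset_iff]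
    · exact (List.Perm.swap _ _ _).trans ((List.Perm.swap _ _ _).cons _)
  by_cases hz1 : (z = x ∨ G.Inc B1 z) ∨ G.Inc B2 z ∨ G.Inc C1 z ∨ G.Inc C2 z
  · exact key _ _ (Or.inl rfl) hr1 hz1
  by_cases hw1 : (w = x ∨ G.Inc B1 w) ∨ G.Inc B2 w ∨ G.Inc C1 w ∨ G.Inc C2 w
  · exact key _ _ (Or.inr rfl) hr2 hw1
  have hz2 : G.Inc A1 z ∨ G.Inc A2 z := by clear key mixed hw; tauto
  have hw2 : G.Inc A1 w ∨ G.Inc A2 w := by clear key mixed hz; tauto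
  clear hz hw hz1 hw1 key
  rcases hz2 with hz2 | hz2 <;> rcases hw2 with hw2 | hw2
  · exact star_theta2 (C1 := C1) hA1 hB1 hB2 hC2 hr1 hr2 (by simp_all) (by simp_all) hz2 hw2
  · exact mixed _ _ _ _ (by simp) hr1 hr2 hz2 hw2
  · exact mixed _ _ _ _ (by simp) hr2 hr1 hw2 hz2
  · clear mixed
    exact star_theta2 (C1 := C2) hA2 hB2 hB1 hC1 hr1 hr2 (by simp_all [disjoint_comm])
      (by simp_all) hz2 hw2

set_option maxHeartbeats 1000000 in
theorem star {S : Finset G.V} {F : Finset G.E} (hC : G.TwoEdgeConnOn S F) {p a b c : G.V}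
    (hp : p ∈ S) (ha : a ∈ S) (hb : b ∈ S) (hc : c ∈ S) : G.Star F p a b c := by
  obtain ⟨z1, z2, T1, T2, hz1, hz2, hT1, hT2, hs1, hs2, hd, -, -⟩ := ear hC ha hp ∅
  obtain rfl : z1 = p := by simpa [Inc] using hz1
  obtain rfl : z2 = z1 := by simpa [Inc] using hz2
  rename' z2 => p
  obtain ⟨x, y, R1, R2, hx, hy, hR1, hR2, hsR1, hsR2, hdR, hdR1, hdR2⟩ := ear hC hb ha (T1 ∪ T2)
  simp only [inc_union, Finset.disjoint_union_right] at hx hy hdR1 hdR2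
  -- both ends of the ear on one trail
  have same : ∀ T T', (T = T1 ∧ T' = T2 ∨ T = T2 ∧ T' = T1) → G.Seg T a p → G.Seg T' a p →
      (x = a ∨ G.Inc T x) → (y = a ∨ G.Inc T y) → G.Star F p a b c := by
    intro T T' hT h h' hx hy
    obtain ⟨V1, V2, hV1, hV2, hV, hsV1, hsV2⟩ := seg_insert h hR1 hR2
      (by obtain ⟨rfl, rfl⟩ | ⟨rfl, rfl⟩ := hT <;> simp_all [disjoint_comm]) hx hy
    have hF : T ∪ R1 ∪ R2 ⊆ F := by
      obtain ⟨rfl, rfl⟩ | ⟨rfl, rfl⟩ := hT <;> simp_all [Finset.union_subset_iff]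
    have hF' : T' ⊆ F := by
      obtain ⟨rfl, rfl⟩ | ⟨rfl, rfl⟩ := hT <;> assumption
    have hD : Disjoint (T ∪ R1 ∪ R2) T' := by
      obtain ⟨rfl, rfl⟩ | ⟨rfl, rfl⟩ := hT <;>
        simp_all [Finset.disjoint_union_left, disjoint_comm]
    have hD1 := hD.mono_left hsV1
    have hD2 := hD.mono_left hsV2
    have hF1 := hsV1.trans hF
    have hF2 := hsV2.trans hF
    obtain ⟨z, w, Q1, Q2, hz, hw, hQ1, hQ2, hsQ1, hsQ2, hdQ, hdQ1, hdQ2⟩ :=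
      ear hC hc ha (T' ∪ V1 ∪ V2)
    simp only [Finset.disjoint_union_right] at hdQ1 hdQ2
    refine star_tri h'.symm hV1 hV2 hQ1 hQ2 ?_ ?_ hz hw
    · clear hT hz hw hx hy hsV1 hsV2 hF hD
      simp_all [disjoint_comm]
    · simp_all
  -- ends of the ear on different trails
  have diff : ∀ T T', (T = T1 ∧ T' = T2 ∨ T = T2 ∧ T' = T1) → G.Seg T a p → G.Seg T' a p →
      G.Inc T x → G.Inc T' y → G.Star F p a b c := by
    intro T T' hT h h' hx hy
    obtain ⟨B1, A1, rfl, hY, hB1, hA1⟩ := h.split (Or.inr hx)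
    obtain ⟨B2, A2, rfl, hZ, hB2, hA2⟩ := h'.split (Or.inr hy)
    have hxS : x ∈ S := by
      refine Seg.inc_mem hC.2.1 ?_ hx
      obtain ⟨rfl, rfl⟩ | ⟨rfl, rfl⟩ := hT <;> assumption
    obtain ⟨z, w, Q1, Q2, hz, hw, hQ1, hQ2, hsQ1, hsQ2, hdQ, hdQ1, hdQ2⟩ :=
      ear hC hc hxS (A1 ∪ A2 ∪ B1 ∪ B2 ∪ R1 ∪ R2)
    refine star_theta hA1 hA2 hB1.symm hB2.symm hR1.symm hR2.symm hQ1 hQ2 ?_ ?_ hz hw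
    · clear hz hw hx hy same
      obtain ⟨rfl, rfl⟩ | ⟨rfl, rfl⟩ := hT <;>
      simp_all [Finset.disjoint_union_left, Finset.disjoint_union_right, disjoint_comm]
    · clear hz hw hx hy same
      obtain ⟨rfl, rfl⟩ | ⟨rfl, rfl⟩ := hT <;> simp_all [Finset.union_subset_iff]
  have s12 := same T1 T2 (by simp) hT1 hT2
  have s21 := same T2 T1 (by simp) hT2 hT1
  have d12 := diff T1 T2 (by simp) hT1 hT2
  have d21 := diff T2 T1 (by simp) hT2 hT1
  clear same diff
  rcases hx with rfl | hx | hx <;> rcases hy with rfl | hy | hy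
  · exact s12 (Or.inl rfl) (Or.inl rfl)
  · exact s12 (Or.inl rfl) (Or.inr hy)
  · exact s21 (Or.inl rfl) (Or.inr hy)
  · exact s12 (Or.inr hx) (Or.inl rfl)
  · exact s12 (Or.inr hx) (Or.inr hy)
  · exact d12 hx hy
  · exact s21 (Or.inr hx) (Or.inl rfl)
  · exact d21 hx hy
  · exact s21 (Or.inr hx) (Or.inr hy)
end
end Multigraph
set_option linter.unusedSimpArgs false
namespace Multigraph
section
variable {G : Multigraph}

/-- The root attaches to the interior of the middle of a trail through the four terminals. -/
def Mid (G : Multigraph) (F : Finset G.E) (L : List G.V) (p : G.V) : Prop :=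
  ∃ q a1 a2 a3 a4 D0 D1 D2 D3 D4, [a1, a2, a3, a4].Perm L ∧ q ≠ a2 ∧ q ≠ a3 ∧
    G.Seg D0 p q ∧ G.Seg D1 a1 a2 ∧ G.Seg D2 a2 q ∧ G.Seg D3 q a3 ∧ G.Seg D4 a3 a4 ∧
    (∀ X ∈ [D0, D1, D2, D3, D4], X ⊆ F) ∧ [D0, D1, D2, D3, D4].Pairwise Disjoint

/-- The root attaches to the end part of a trail through the four terminals. -/
def EndAt (G : Multigraph) (F : Finset G.E) (L : List G.V) (p : G.V) : Prop :=
  ∃ q a1 a2 a3 a4 D0 D1 D2 D3 D4, [a1, a2, a3, a4].Perm L ∧ q ≠ a2 ∧ q ≠ a3 ∧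
    G.Seg D0 p q ∧ G.Seg D1 q a1 ∧ G.Seg D2 q a2 ∧ G.Seg D3 a2 a3 ∧ G.Seg D4 a3 a4 ∧
    (∀ X ∈ [D0, D1, D2, D3, D4], X ⊆ F) ∧ [D0, D1, D2, D3, D4].Pairwise Disjoint

theorem perm_rev4 {α : Type*} (a b c d : α) : [d, c, b, a].Perm [a, b, c, d] :=
  List.reverse_perm [a, b, c, d]

theorem side_attach {F : Finset G.E} {L : List G.V} {p x a1 a2 a3 a4 : G.V}
    {D1 D2 D3 R : Finset G.E} (hL : L.Nodup) (hperm : [a1, a2, a3, a4].Perm L)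
    (h1 : G.Seg D1 a1 a2) (h2 : G.Seg D2 a2 a3) (h3 : G.Seg D3 a3 a4) (hR : G.Seg R p x)
    (hd : [D1, D2, D3, R].Pairwise Disjoint) (hs : ∀ X ∈ [D1, D2, D3, R], X ⊆ F)
    (hx : x = a1 ∨ G.Inc (D1 ∪ D2 ∪ D3) x) :
    G.Mid F L p ∨ G.EndAt F L p ∨ x = a2 ∨ x = a3 := by
  have hnd := hperm.nodup_iff.2 hL
  simp only [List.nodup_cons, List.mem_cons, List.not_mem_nil, or_false, not_or,
    not_false_eq_true, List.nodup_nil, and_true] at hnd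
  by_cases e2 : x = a2
  · simp [e2]
  by_cases e3 : x = a3
  · simp [e3]
  simp only [inc_union] at hx
  by_cases e1 : x = a1
  · subst e1
    refine Or.inr (Or.inl ⟨x, x, a2, a3, a4, R, ∅, D1, D2, D3, hperm, e2, e3, hR, .nil _, h1, h2, h3,
      ?_, ?_⟩)
    · simp_all
    · simp_all [disjoint_comm]
  have hx : G.Inc D1 x ∨ G.Inc D2 x ∨ G.Inc D3 x := by tauto
  obtain hx | hx | hx := hx
  · obtain ⟨Y1, Y2, rfl, hY, h4, h5⟩ := h1.split (Or.inr hx)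
    clear hx
    refine Or.inr (Or.inl ⟨x, a1, a2, a3, a4, R, Y1, Y2, D2, D3, hperm, e2, e3, hR, h4.symm, h5,
      h2, h3, ?_, ?_⟩)
    · simp_all [Finset.union_subset_iff]
    · simp_all [Finset.disjoint_union_left, Finset.disjoint_union_right, disjoint_comm]
  · obtain ⟨Y1, Y2, rfl, hY, h4, h5⟩ := h2.split (Or.inr hx)
    clear hx
    refine Or.inl ⟨x, a1, a2, a3, a4, R, D1, Y1, Y2, D3, hperm, e2, e3, hR, h1, h4,
      h5, h3, ?_, ?_⟩
    · simp_all [Finset.union_subset_iff]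
    · simp_all [Finset.disjoint_union_left, Finset.disjoint_union_right, disjoint_comm]
  · obtain ⟨Y1, Y2, rfl, hY, h4, h5⟩ := h3.split (Or.inr hx)
    clear hx
    refine Or.inr (Or.inl ⟨x, a4, a3, a2, a1, R, Y2, Y1, D2, D1, (perm_rev4 _ _ _ _).trans hperm,
      e3, e2, hR, h5, h4.symm, h2.symm, h1.symm, ?_, ?_⟩)
    · simp_all [Finset.union_subset_iff]
    · simp_all [Finset.disjoint_union_left, Finset.disjoint_union_right, disjoint_comm]

set_option maxHeartbeats 1000000 in
theorem side {S : Finset G.V} {F : Finset G.E} (hC : G.TwoEdgeConnOn S F) {p : G.V}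
    {t : Fin 4 → G.V} (hL : [t 0, t 1, t 2, t 3].Nodup) (ht : ∀ i, t i ∈ S) (hp : p ∈ S) :
    G.Mid F [t 0, t 1, t 2, t 3] p ∨ G.EndAt F [t 0, t 1, t 2, t 3] p := by
  have hmem : ∀ x ∈ [t 0, t 1, t 2, t 3], x ∈ S := by simp [ht]
  generalize hLt : [t 0, t 1, t 2, t 3] = L at *
  by_cases hpL : p ∈ L
  · obtain ⟨a, b, c, habc⟩ : ∃ a b c, [p, a, b, c].Perm L := by
      have h1 := List.perm_cons_erase hpL
      have h2 : (L.erase p).length = 3 := by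
        rw [List.length_erase_of_mem hpL, ← hLt]; simp
      obtain ⟨a, b, c, h⟩ := List.length_eq_three.1 h2
      exact ⟨a, b, c, by rw [← h]; exact h1.symm⟩
    obtain ⟨s1, s2, s3, D1, D2, D3, hperm, h1, h2, h3, hs1, hs2, hs3, hd⟩ :=
      star hC (a := a) (b := b) (c := c) hp (hmem _ (habc.subset (by simp)))
        (hmem _ (habc.subset (by simp))) (hmem _ (habc.subset (by simp)))
    have hperm' : [p, s1, s2, s3].Perm L := (hperm.cons p).trans habc
    have hnd := hperm'.nodup_iff.2 hL
    simp only [List.nodup_cons, List.mem_cons, List.not_mem_nil, or_false, not_or] at hnd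
    exact Or.inr ⟨p, p, s1, s2, s3, ∅, ∅, D1, D2, D3, hperm', hnd.1.1, hnd.1.2.1, .nil _, .nil _,
      h1, h2, h3, by simp [hs1, hs2, hs3], by simp_all⟩
  · obtain ⟨a2, a3, a4, D1, D2, D3, hperm, h1, h2, h3, hs1, hs2, hs3, hd⟩ :=
      star hC (ht 0) (ht 1) (ht 2) (ht 3)
    replace hperm := (hperm.cons (t 0)).trans (List.Perm.of_eq hLt)
    have ha1 := ht 0
    generalize t 0 = a1 at *
    clear hLt ht t
    obtain ⟨x, y, R1, R2, hx, hy, hR1, hR2, hsR1, hsR2, hdR, hdR1, hdR2⟩ :=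
      ear hC hp ha1 (D1 ∪ D2 ∪ D3)
    simp only [Finset.disjoint_union_right] at hdR1 hdR2
    have hp2 : p ≠ a2 := by rintro rfl; exact hpL (hperm.subset (by simp))
    have hp3 : p ≠ a3 := by rintro rfl; exact hpL (hperm.subset (by simp))
    clear hpL hmem
    obtain h | h | hxx := side_attach hL hperm h1 h2 h3 hR1 (F := F)
      (by clear hx hy; simp_all [disjoint_comm]) (by simp [hs1, hs2, hs3, hsR1]) hx
    · exact Or.inl h
    · exact Or.inr h
    obtain h | h | hyy := side_attach hL hperm h1 h2 h3 hR2 (F := F)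
      (by clear hx hy; simp_all [disjoint_comm]) (by simp [hs1, hs2, hs3, hsR2]) hy
    · exact Or.inl h
    · exact Or.inr h
    clear hx hy
    left
    rcases hxx with rfl | rfl <;> rcases hyy with rfl | rfl
    · refine ⟨p, a1, y, a3, a4, ∅, D1, R1, R2 ∪ D2, D3, hperm, hp2, hp3, .nil _, h1, hR1.symm,
        hR2.trans h2 hdR2.1.2, h3, ?_, ?_⟩
      · simp [Finset.union_subset_iff, *]
      · simp_all [Finset.disjoint_union_left, Finset.disjoint_union_right, disjoint_comm]
    · refine ⟨p, a1, x, y, a4, ∅, D1, R1, R2, D3, hperm, hp2, hp3, .nil _, h1, hR1.symm,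
        hR2, h3, ?_, ?_⟩
      · simp [*]
      · simp_all [disjoint_comm]
    · refine ⟨p, a1, y, x, a4, ∅, D1, R2, R1, D3, hperm, hp2, hp3, .nil _, h1, hR2.symm,
        hR1, h3, ?_, ?_⟩
      · simp [*]
      · simp_all [disjoint_comm]
    · refine ⟨p, a1, a2, y, a4, ∅, D1, D2 ∪ R1, R2, D3, hperm, hp2, hp3, .nil _, h1,
        h2.trans hR1.symm hdR1.1.2.symm, hR2, h3, ?_, ?_⟩
      · simp [Finset.union_subset_iff, *]
      · simp_all [Finset.disjoint_union_left, Finset.disjoint_union_right, disjoint_comm]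

/-- Weak conclusion used on the second side. -/
theorem side_weak {F : Finset G.E} {L : List G.V} {p : G.V} (hL : L.Nodup)
    (h : G.Mid F L p ∨ G.EndAt F L p) :
    ∃ q b1 b2 b3 D0 D1 D2 D3, [b1, b2, b3].Nodup ∧ (∀ x ∈ [b1, b2, b3], x ∈ L) ∧ q ≠ b2 ∧
    G.Seg D0 p q ∧ G.Seg D1 q b1 ∧ G.Seg D2 q b2 ∧ G.Seg D3 b2 b3 ∧
    (∀ X ∈ [D0, D1, D2, D3], X ⊆ F) ∧ [D0, D1, D2, D3].Pairwise Disjoint := by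
  obtain h | h := h
  · obtain ⟨q, a1, a2, a3, a4, D0, D1, D2, D3, D4, hp, hq2, hq3, h0, h1, h2, h3, h4, hs, hd⟩ := h
    have hnd := hp.nodup_iff.2 hL
    refine ⟨q, a2, a3, a4, D0, D2, D3, D4, ?_, ?_, hq3, h0, h2.symm, h3, h4, ?_, ?_⟩
    · exact (List.nodup_cons.1 hnd).2
    · intro x hx; exact hp.subset (List.mem_cons_of_mem _ hx)
    · simp_all
    · simp_all
  · obtain ⟨q, a1, a2, a3, a4, D0, D1, D2, D3, D4, hp, hq2, hq3, h0, h1, h2, h3, h4, hs, hd⟩ := h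
    have hnd := hp.nodup_iff.2 hL
    refine ⟨q, a1, a2, a3, D0, D1, D2, D3, ?_, ?_, hq2, h0, h1, h2, h3, ?_, ?_⟩
    · clear hs hd; simp_all
    · intro x hx; apply hp.subset; simp at hx ⊢; tauto
    · simp_all
    · simp_all

end
end Multigraph
namespace Multigraph
section
variable {G : Multigraph}

/-- A walk using only edges in the classes `N i`, `i ∈ I`. -/
def CI (N : ℕ → Finset G.E) (I : Finset ℕ) (u v : G.V) : Prop :=
  ∃ p : G.Walk u v, ∀ e ∈ p.edges, ∃ i ∈ I, e ∈ N i

theorem CI.of {N : ℕ → Finset G.E} {s : Finset G.E} {u v : G.V} (h : G.Seg s u v) (i : ℕ)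
    (hi : N i = s) : CI N {i} u v := by
  obtain ⟨p, -, hp⟩ := h
  exact ⟨p, fun e he => ⟨i, by simp, by rw [hi, ← hp]; simpa using he⟩⟩

theorem CI.symm {N : ℕ → Finset G.E} {I : Finset ℕ} {u v : G.V} (h : CI N I u v) :
    CI N I v u := by
  obtain ⟨p, hp⟩ := h
  exact ⟨p.reverse, fun e he => hp e (by simpa [Walk.edges_reverse] using he)⟩

theorem CI.trans {N : ℕ → Finset G.E} {I J : Finset ℕ} {u v w : G.V} (h : CI N I u v)
    (h' : CI N J v w) : CI N (I ∪ J) u w := by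
  obtain ⟨p, hp⟩ := h
  obtain ⟨q, hq⟩ := h'
  refine ⟨p.append q, fun e he => ?_⟩
  rw [Walk.edges_append, List.mem_append] at he
  obtain he | he := he
  · obtain ⟨i, hi, h⟩ := hp e he
    exact ⟨i, Finset.mem_union_left _ hi, h⟩
  · obtain ⟨i, hi, h⟩ := hq e he
    exact ⟨i, Finset.mem_union_right _ hi, h⟩

theorem immerses_of_CI (L : List (Finset G.E)) (hL : L.Pairwise Disjoint) (l r : Fin 3 → G.V)
    (hl : Function.Injective l) (hr : Function.Injective r) (hlr : ∀ i j, l i ≠ r j)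
    (I : Fin 3 → Fin 3 → Finset ℕ)
    (hI : ∀ x y : Fin 3 × Fin 3, x ≠ y → Disjoint (I x.1 x.2) (I y.1 y.2))
    (h : ∀ i j, CI (fun n => L.getD n ∅) (I i j) (l i) (r j)) : Immerses K33 G := by
  have hN : ∀ i j e, e ∈ L.getD i ∅ → e ∈ L.getD j ∅ → i = j := by
    have key : ∀ i j e, i < j → e ∈ L.getD i ∅ → e ∈ L.getD j ∅ → False := by
      intro i j e hij hi hj
      by_cases hjl : j < L.length
      · rw [List.getD_eq_getElem _ _ hjl] at hj
        rw [List.getD_eq_getElem _ _ (hij.trans hjl)] at hi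
        exact Finset.disjoint_left.1 (List.pairwise_iff_getElem.1 hL i j _ _ hij) hi hj
      · rw [List.getD_eq_default _ _ (not_lt.1 hjl)] at hj
        simp at hj
    intro i j e hi hj
    rcases lt_trichotomy i j with h | h | h
    · exact (key i j e h hi hj).elim
    · exact h
    · exact (key j i e h hj hi).elim
  have h' : ∀ i j, ∃ p : G.Walk (l i) (r j), p.IsPath ∧
      ∀ e ∈ p.edges, ∃ n ∈ I i j, e ∈ L.getD n ∅ := by
    intro i j
    obtain ⟨p, hp⟩ := h i j
    obtain ⟨q, hq, hs⟩ := p.exists_path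
    exact ⟨q, hq, fun e he => hp e (hs e he)⟩
  choose W hW1 hW2 using h'
  refine ⟨{ vmap := Sum.elim l r
            inj := hl.sumElim hr hlr
            pstart := fun e => l e.1
            pend := fun e => r e.2
            walk := fun e => W e.1 e.2
            ends_eq := fun e => by simp [K33]
            isPath := fun e => hW1 _ _
            edgeDisj := ?_ }⟩
  intro e e' hee f hf hf'
  obtain ⟨n, hn, h1⟩ := hW2 _ _ f hf
  obtain ⟨m, hm, h2⟩ := hW2 _ _ f hf'
  obtain rfl := hN n m f h1 h2
  exact Finset.disjoint_left.1 (hI e e' hee) hn hm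

/-- There is a connecting trail avoiding `v`. -/
theorem exists_link (h2c : G.TwoConnected) {S1 S2 : Finset G.V} {F1 F2 : Finset G.E}
    (hF1 : ∀ e ∈ F1, ∀ x ∈ G.ends e, x ∈ S1) (hF2 : ∀ e ∈ F2, ∀ x ∈ G.ends e, x ∈ S2)
    {p1 p2 v : G.V} (hp1 : p1 ∈ S1) (hp2 : p2 ∈ S2) (hv1 : v ∉ S1) (hv2 : v ∉ S2) :
    ∃ q1 ∈ S1, ∃ q2 ∈ S2, ∃ P, G.Seg P q1 q2 ∧ ∀ e ∈ P, e ∉ F1 ∧ e ∉ F2 ∧ v ∉ G.ends e := by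
  classical
  obtain ⟨p, hp⟩ : ∃ p : G.Walk p1 p2, ∀ e ∈ p.edges, v ∉ G.ends e := by
    by_contra hcon
    let R : G.V → Prop := fun x => ∃ p : G.Walk p1 x, ∀ e ∈ p.edges, v ∉ G.ends e
    refine h2c.2.2 v ⟨Finset.univ.filter fun x => x ≠ v ∧ R x,
      Finset.univ.filter fun x => x ≠ v ∧ ¬ R x, ⟨p1, ?_⟩, ⟨p2, ?_⟩, ?_, ?_, ?_, ?_, ?_⟩
    · simp only [Finset.mem_filter, Finset.mem_univ, true_and]
      exact ⟨fun h => hv1 (h ▸ hp1), .nil _, by simp [Walk.edges]⟩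
    · simp only [Finset.mem_filter, Finset.mem_univ, true_and]
      exact ⟨fun h => hv2 (h ▸ hp2), hcon⟩
    · rw [Finset.disjoint_left]
      intro x hx hx'
      simp only [Finset.mem_filter, Finset.mem_univ, true_and] at hx hx'
      exact hx'.2 hx.2
    · simp
    · simp
    · intro x
      simp only [Finset.mem_union, Finset.mem_filter, Finset.mem_univ, true_and]
      tauto
    · rintro e ⟨x, hx, y, hy, he⟩
      simp only [Finset.mem_filter, Finset.mem_univ, true_and] at hx hy
      obtain ⟨hxv, p, hp⟩ := hx
      refine hy.2 ⟨p.append (.cons e he (.nil _)), ?_⟩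
      intro f hf
      simp only [Walk.edges_append, Walk.edges, List.mem_append, List.mem_cons,
        List.not_mem_nil, or_false] at hf
      obtain hf | rfl := hf
      · exact hp f hf
      · rw [he, Sym2.mem_iff]
        rintro (h | h)
        · exact hxv h.symm
        · exact hy.1 h.symm
  obtain ⟨q2, hq2, r, hr1, hr2⟩ := p.first_hit (S2 : Set G.V) hp2
  obtain ⟨q1, hq1, t, ht1, ht2⟩ := r.reverse.first_hit (S1 : Set G.V) hp1
  obtain ⟨t', ht', hts⟩ := t.exists_path
  refine ⟨q1, hq1, q2, hq2, _, Seg.symm ⟨t', ht'.nodup_edges, rfl⟩, ?_⟩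
  intro e he
  have het : e ∈ t.edges := hts e (by simpa using he)
  have her : e ∈ r.edges := by simpa [Walk.edges_reverse] using ht1 e het
  refine ⟨fun h => ?_, fun h => ?_, hp e (hr1 e her)⟩
  · obtain ⟨x, hx, hx'⟩ := ht2 e het
    exact hx' (hF1 e h x hx)
  · obtain ⟨x, hx, hx'⟩ := hr2 e her
    exact hx' (hF2 e h x hx)

/-- The set of edges between `v` and `x`. -/
def spoke (v x : G.V) : Finset G.E := Finset.univ.filter fun e => G.ends e = s(v, x)

theorem spoke_disj {v x y : G.V} (h : x ≠ y) : Disjoint (spoke v x) (spoke v y) := by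
  rw [Finset.disjoint_left]
  intro e he he'
  simp only [spoke, Finset.mem_filter, Finset.mem_univ, true_and] at he he'
  rw [he] at he'
  rw [Sym2.eq_iff] at he'
  obtain ⟨-, h1⟩ | ⟨h1, h2⟩ := he'
  · exact h h1
  · exact h (h2.trans h1)

theorem CI.spoke {N : ℕ → Finset G.E} {v x : G.V} (h : ∃ e, G.ends e = s(v, x)) (i : ℕ)
    (hi : N i = spoke v x) : CI N {i} v x := by
  obtain ⟨e, he⟩ := h
  refine ⟨.cons e he (.nil _), fun f hf => ⟨i, by simp, ?_⟩⟩
  simp only [Walk.edges, List.mem_cons, List.not_mem_nil, or_false] at hf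
  subst hf
  rw [hi]
  simp [Multigraph.spoke, he]

theorem pairwise_all {F1 F2 P : Finset G.E} {v : G.V} (hF : Disjoint F1 F2)
    (hv1 : ∀ e ∈ F1, v ∉ G.ends e) (hv2 : ∀ e ∈ F2, v ∉ G.ends e)
    (hP : ∀ e ∈ P, e ∉ F1 ∧ e ∉ F2 ∧ v ∉ G.ends e)
    {l1 l2 : List (Finset G.E)} {l3 : List G.V} (h1 : l1.Pairwise Disjoint)
    (h2 : l2.Pairwise Disjoint) (h3 : l3.Nodup) (hs1 : ∀ X ∈ l1, X ⊆ F1)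
    (hs2 : ∀ X ∈ l2, X ⊆ F2) :
    (l1 ++ (l2 ++ P :: l3.map (spoke v))).Pairwise Disjoint := by
  have hsp : ∀ x, ∀ e ∈ spoke (G := G) v x, v ∈ G.ends e := by
    intro x e he
    simp only [spoke, Finset.mem_filter, Finset.mem_univ, true_and] at he
    simp [he]
  simp only [List.pairwise_append, List.pairwise_cons, List.mem_append, List.mem_cons,
    List.mem_map, List.pairwise_map]
  refine ⟨h1, ⟨h2, ⟨?_, ?_⟩, ?_⟩, ?_⟩
  · rintro X ⟨x, -, rfl⟩
    exact Finset.disjoint_left.2 fun e he he' => (hP e he).2.2 (hsp x e he')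
  · exact h3.imp fun h => spoke_disj h
  · rintro X hX Y (rfl | ⟨x, -, rfl⟩)
    · exact Finset.disjoint_left.2 fun e he he' => (hP e he').2.1 (hs2 X hX he)
    · exact Finset.disjoint_left.2 fun e he he' => hv2 e (hs2 X hX he) (hsp x e he')
  · rintro X hX Y (hY | rfl | ⟨x, -, rfl⟩)
    · exact hF.mono (hs1 X hX) (hs2 Y hY)
    · exact Finset.disjoint_left.2 fun e he he' => (hP e he').1 (hs1 X hX he)
    · exact Finset.disjoint_left.2 fun e he he' => hv1 e (hs1 X hX he) (hsp x e he')

theorem inj3 {α : Type*} {a b c : α} (h1 : a ≠ b) (h2 : a ≠ c) (h3 : b ≠ c) :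
    Function.Injective ![a, b, c] := by
  intro i j hij
  fin_cases i <;> fin_cases j <;> simp_all

end
end Multigraph
namespace Multigraph
section
variable {G : Multigraph}

theorem Seg.mem_of {S : Finset G.V} {F s : Finset G.E} (hF : ∀ e ∈ F, ∀ x ∈ G.ends e, x ∈ S)
    {u v : G.V} (h : G.Seg s u v) (hs : s ⊆ F) (hu : u ∈ S) : v ∈ S := by
  obtain ⟨p, -, rfl⟩ := h
  induction p with
  | nil _ => exact hu
  | cons e he p ih =>
    simp only [Walk.edges, List.toFinset_cons, Finset.insert_subset_iff] at hs
    exact ih (hF e hs.1 _ (by rw [he]; exact Sym2.mem_mk_right _ _)) hs.2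

theorem immerses9 (L : List (Finset G.E)) (hL : L.Pairwise Disjoint)
    {l0 l1 l2 r0 r1 r2 : G.V} {I00 I01 I02 I10 I11 I12 I20 I21 I22 : Finset ℕ}
    (hd : [l0, l1, l2, r0, r1, r2].Nodup)
    (h00 : CI (fun n => L.getD n ∅) I00 l0 r0) (h01 : CI (fun n => L.getD n ∅) I01 l0 r1)
    (h02 : CI (fun n => L.getD n ∅) I02 l0 r2) (h10 : CI (fun n => L.getD n ∅) I10 l1 r0)
    (h11 : CI (fun n => L.getD n ∅) I11 l1 r1) (h12 : CI (fun n => L.getD n ∅) I12 l1 r2)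
    (h20 : CI (fun n => L.getD n ∅) I20 l2 r0) (h21 : CI (fun n => L.getD n ∅) I21 l2 r1)
    (h22 : CI (fun n => L.getD n ∅) I22 l2 r2)
    (hI : [I00, I01, I02, I10, I11, I12, I20, I21, I22].Pairwise Disjoint) :
    Immerses K33 G := by
  simp only [List.nodup_cons, List.mem_cons, List.not_mem_nil, or_false, not_or,
    not_false_eq_true, List.nodup_nil, and_true] at hd
  refine immerses_of_CI L hL ![l0, l1, l2] ![r0, r1, r2] (inj3 ?_ ?_ ?_) (inj3 ?_ ?_ ?_) ?_
    ![![I00, I01, I02], ![I10, I11, I12], ![I20, I21, I22]] ?_ ?_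
  iterate 6 tauto
  · intro i j
    fin_cases i <;> fin_cases j <;> simp <;> tauto
  · have key : ∀ x : Fin 3 × Fin 3, ∀ h : 3 * x.1.1 + x.2.1 < 9,
        (![![I00, I01, I02], ![I10, I11, I12], ![I20, I21, I22]] : Fin 3 → Fin 3 → Finset ℕ) x.1 x.2
        = [I00, I01, I02, I10, I11, I12, I20, I21, I22][3 * x.1.1 + x.2.1] := by
      rintro ⟨i, j⟩ h
      fin_cases i <;> fin_cases j <;> rfl
    intro x y hxy
    have hx : 3 * x.1.1 + x.2.1 < 9 := by omega
    have hy : 3 * y.1.1 + y.2.1 < 9 := by omega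
    rw [key x hx, key y hy]
    have hne : 3 * x.1.1 + x.2.1 ≠ 3 * y.1.1 + y.2.1 := by
      intro h
      apply hxy
      ext <;> omega
    rcases lt_or_gt_of_ne hne with h | h
    · exact List.pairwise_iff_getElem.1 hI _ _ _ _ h
    · exact (List.pairwise_iff_getElem.1 hI _ _ _ _ h).symm
  · intro i j
    fin_cases i <;> fin_cases j <;> assumption

theorem case_end {S1 S2 : Finset G.V} {F1 F2 P : Finset G.E} {v p1 p2 : G.V} {L1 L2 : List G.V}
    (hS : Disjoint S1 S2) (hF : Disjoint F1 F2)
    (hF1 : ∀ e ∈ F1, ∀ x ∈ G.ends e, x ∈ S1)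
    (hv1 : v ∉ S1) (hv2 : v ∉ S2)
    (hw1 : ∀ e ∈ F1, v ∉ G.ends e) (hw2 : ∀ e ∈ F2, v ∉ G.ends e)
    (hP : ∀ e ∈ P, e ∉ F1 ∧ e ∉ F2 ∧ v ∉ G.ends e) (hPs : G.Seg P p1 p2) (hp1 : p1 ∈ S1)
    (hL1 : L1.Nodup) (hm1 : ∀ x ∈ L1, x ∈ S1) (hg1 : ∀ x ∈ L1, ∃ e, G.ends e = s(v, x))
    {c1 c2 c3 : G.V} (hL2 : [c1, c2, c3].Nodup) (hc : ∀ x ∈ [c1, c2, c3], x ∈ L2)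
    (hm2 : ∀ x ∈ L2, x ∈ S2) (hg2 : ∀ x ∈ L2, ∃ e, G.ends e = s(v, x))
    (h1 : G.EndAt F1 L1 p1) (h2 : G.Star F2 p2 c1 c2 c3) : Immerses K33 G := by
  obtain ⟨q, a1, a2, a3, a4, D0, D1, D2, D3, D4, hp, hq2, hq3, d0, d1, d2, d3, d4, hs, hd⟩ := h1
  obtain ⟨b1, b2, b3, E1, E2, E3, hpb, e1, e2, e3, hs1, hs2, hs3, he⟩ := h2
  have hnd := hp.nodup_iff.2 hL1
  have hnb := hpb.nodup_iff.2 hL2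
  have ma : ∀ x ∈ [a1, a2, a3, a4], x ∈ S1 := fun x hx => hm1 x (hp.subset hx)
  have ga : ∀ x ∈ [a1, a2, a3, a4], ∃ e, G.ends e = s(v, x) := fun x hx => hg1 x (hp.subset hx)
  have mb : ∀ x ∈ [b1, b2, b3], x ∈ S2 := fun x hx => hm2 x (hc x (hpb.subset hx))
  have gb : ∀ x ∈ [b1, b2, b3], ∃ e, G.ends e = s(v, x) :=
    fun x hx => hg2 x (hc x (hpb.subset hx))
  have hq : q ∈ S1 := d0.mem_of hF1 (hs _ (by simp)) hp1
  have hSS : ∀ x ∈ S1, ∀ y ∈ S2, x ≠ y := fun x hx y hy h =>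
    Finset.disjoint_left.1 hS hx (h ▸ hy)
  have hvS1 : ∀ x ∈ S1, v ≠ x := fun x hx h => hv1 (h ▸ hx)
  have hvS2 : ∀ x ∈ S2, v ≠ x := fun x hx h => hv2 (h ▸ hx)
  have hall := pairwise_all (l1 := [D0, D1, D2, D3, D4]) (l2 := [E1, E2, E3])
    (l3 := [a1, a2, a3, a4] ++ [b1, b2, b3]) hF hw1 hw2 hP hd he
    (List.nodup_append.2 ⟨hnd, hnb, fun x hx y hy => hSS x (ma x hx) y (mb y hy)⟩) hs
    (by simp [hs1, hs2, hs3])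
  simp only [List.mem_cons, List.not_mem_nil, or_false, forall_eq_or_imp, forall_eq] at ma ga mb gb
  obtain ⟨ma1, ma2, ma3, ma4⟩ := ma
  obtain ⟨ga1, ga2, ga3, ga4⟩ := ga
  obtain ⟨mb1, mb2, mb3⟩ := mb
  obtain ⟨gb1, gb2, gb3⟩ := gb
  simp only [List.nodup_cons, List.mem_cons, List.not_mem_nil, or_false, not_or,
    not_false_eq_true, List.nodup_nil, and_true] at hnd hnb
  refine immerses9 (l0 := v) (l1 := a2) (l2 := b1) (r0 := a3) (r1 := q) (r2 := b2) _ hall ?_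
    (CI.spoke ga3 11 rfl)
    ((CI.spoke ga1 9 rfl).trans (CI.of d1.symm 1 rfl))
    (CI.spoke gb2 14 rfl)
    (CI.of d3 3 rfl)
    (CI.of d2.symm 2 rfl)
    ((CI.spoke ga2 10 rfl).symm.trans ((CI.spoke gb3 15 rfl).trans (CI.of e3.symm 7 rfl)))
    ((CI.spoke gb1 13 rfl).symm.trans ((CI.spoke ga4 12 rfl).trans (CI.of d4.symm 4 rfl)))
    ((CI.of e1.symm 5 rfl).trans ((CI.of hPs.symm 8 rfl).trans (CI.of d0 0 rfl)))
    (CI.of e2 6 rfl) (by decide)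
  simp only [List.nodup_cons, List.mem_cons, List.not_mem_nil, or_false, not_or,
    not_false_eq_true, List.nodup_nil, and_true]
  exact ⟨⟨hvS1 _ ma2, hvS2 _ mb1, hvS1 _ ma3, hvS1 _ hq, hvS2 _ mb2⟩,
    ⟨hSS _ ma2 _ mb1, by tauto, hq2.symm, hSS _ ma2 _ mb2⟩,
    ⟨(hSS _ ma3 _ mb1).symm, (hSS _ hq _ mb1).symm, by tauto⟩,
    ⟨hq3.symm, hSS _ ma3 _ mb2⟩, hSS _ hq _ mb2⟩

theorem case_mid {S1 S2 : Finset G.V} {F1 F2 P : Finset G.E} {v p1 p2 : G.V} {L1 L2 : List G.V}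
    (hS : Disjoint S1 S2) (hF : Disjoint F1 F2)
    (hF1 : ∀ e ∈ F1, ∀ x ∈ G.ends e, x ∈ S1)
    (hF2 : ∀ e ∈ F2, ∀ x ∈ G.ends e, x ∈ S2)
    (hv1 : v ∉ S1) (hv2 : v ∉ S2)
    (hw1 : ∀ e ∈ F1, v ∉ G.ends e) (hw2 : ∀ e ∈ F2, v ∉ G.ends e)
    (hP : ∀ e ∈ P, e ∉ F1 ∧ e ∉ F2 ∧ v ∉ G.ends e) (hPs : G.Seg P p1 p2) (hp1 : p1 ∈ S1) (hp2 : p2 ∈ S2)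
    (hL1 : L1.Nodup) (hm1 : ∀ x ∈ L1, x ∈ S1) (hg1 : ∀ x ∈ L1, ∃ e, G.ends e = s(v, x))
    (hL2 : L2.Nodup)
    (hm2 : ∀ x ∈ L2, x ∈ S2) (hg2 : ∀ x ∈ L2, ∃ e, G.ends e = s(v, x))
    (h1 : G.Mid F1 L1 p1) (h2 : G.Mid F2 L2 p2 ∨ G.EndAt F2 L2 p2) : Immerses K33 G := by
  obtain ⟨q, a1, a2, a3, a4, D0, D1, D2, D3, D4, hp, hq2, hq3, d0, d1, d2, d3, d4, hs, hd⟩ := h1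
  obtain ⟨r, b1, b2, b3, E0, E1, E2, E3, hnb, hpb, hrb, e0, e1, e2, e3, hs', he⟩ := side_weak hL2 h2
  have hnd := hp.nodup_iff.2 hL1
  have ma : ∀ x ∈ [a1, a2, a3, a4], x ∈ S1 := fun x hx => hm1 x (hp.subset hx)
  have ga : ∀ x ∈ [a1, a2, a3, a4], ∃ e, G.ends e = s(v, x) := fun x hx => hg1 x (hp.subset hx)
  have mb : ∀ x ∈ [b1, b2, b3], x ∈ S2 := fun x hx => hm2 x (hpb x hx)
  have gb : ∀ x ∈ [b1, b2, b3], ∃ e, G.ends e = s(v, x) :=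
    fun x hx => hg2 x (hpb x hx)
  have hq : q ∈ S1 := d0.mem_of hF1 (hs _ (by simp)) hp1
  have hr : r ∈ S2 := e0.mem_of hF2 (hs' _ (by simp)) hp2
  have hSS : ∀ x ∈ S1, ∀ y ∈ S2, x ≠ y := fun x hx y hy h =>
    Finset.disjoint_left.1 hS hx (h ▸ hy)
  have hvS1 : ∀ x ∈ S1, v ≠ x := fun x hx h => hv1 (h ▸ hx)
  have hvS2 : ∀ x ∈ S2, v ≠ x := fun x hx h => hv2 (h ▸ hx)
  have hall := pairwise_all (l1 := [D0, D1, D2, D3, D4]) (l2 := [E0, E1, E2, E3])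
    (l3 := [a1, a2, a3, a4] ++ [b1, b2, b3]) hF hw1 hw2 hP hd he
    (List.nodup_append.2 ⟨hnd, hnb, fun x hx y hy => hSS x (ma x hx) y (mb y hy)⟩) hs
    hs'
  simp only [List.mem_cons, List.not_mem_nil, or_false, forall_eq_or_imp, forall_eq] at ma ga mb gb
  obtain ⟨ma1, ma2, ma3, ma4⟩ := ma
  obtain ⟨ga1, ga2, ga3, ga4⟩ := ga
  obtain ⟨mb1, mb2, mb3⟩ := mb
  obtain ⟨gb1, gb2, gb3⟩ := gb
  simp only [List.nodup_cons, List.mem_cons, List.not_mem_nil, or_false, not_or,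
    not_false_eq_true, List.nodup_nil, and_true] at hnd hnb
  refine immerses9 (l0 := v) (l1 := q) (l2 := b2) (r0 := a2) (r1 := a3) (r2 := r) _ hall ?_
    (CI.spoke ga2 11 rfl)
    (CI.spoke ga3 12 rfl)
    ((CI.spoke gb1 14 rfl).trans (CI.of e1.symm 6 rfl))
    (CI.of d2.symm 2 rfl)
    (CI.of d3 3 rfl)
    ((CI.of d0.symm 0 rfl).trans ((CI.of hPs 9 rfl).trans (CI.of e0 5 rfl)))
    ((CI.spoke gb2 15 rfl).symm.trans ((CI.spoke ga1 10 rfl).trans (CI.of d1 1 rfl)))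
    ((CI.of e3 8 rfl).trans ((CI.spoke gb3 16 rfl).symm.trans
      ((CI.spoke ga4 13 rfl).trans (CI.of d4.symm 4 rfl))))
    (CI.of e2.symm 7 rfl) (by decide)
  simp only [List.nodup_cons, List.mem_cons, List.not_mem_nil, or_false, not_or,
    not_false_eq_true, List.nodup_nil, and_true]
  exact ⟨⟨hvS1 _ hq, hvS2 _ mb2, hvS1 _ ma2, hvS1 _ ma3, hvS2 _ hr⟩,
    ⟨hSS _ hq _ mb2, hq2, hq3, hSS _ hq _ hr⟩,
    ⟨(hSS _ ma2 _ mb2).symm, (hSS _ ma3 _ mb2).symm, hrb.symm⟩,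
    ⟨by tauto, hSS _ ma2 _ hr⟩, hSS _ ma3 _ hr⟩

end
end Multigraph

open Multigraph in
/-- Let `G` be a 2-connected graph containing two vertex-disjoint
2-edge-connected subgraphs `C1 = (S1, F1)` and `C2 = (S2, F2)`, a path `P`
joining them that is edge-disjoint from both, and a vertex `v` outside
`S1 ∪ S2` joined by single edges to at least four distinct vertices of `C1`
and at least four distinct vertices of `C2`.  Then `G` contains an immersion
of `K_{3,3}`. -/
theorem k33_of_two_blocks (G : Multigraph) (h2c : G.TwoConnected)
    (S1 S2 : Finset G.V) (F1 F2 : Finset G.E)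
    (hC1 : G.TwoEdgeConnOn S1 F1) (hC2 : G.TwoEdgeConnOn S2 F2)
    (hSdisj : Disjoint S1 S2)
    (p1 p2 : G.V) (hp1 : p1 ∈ S1) (hp2 : p2 ∈ S2)
    (P : G.Walk p1 p2) (hP : P.IsPath)
    (hPdisj : ∀ e ∈ P.edges, e ∉ F1 ∧ e ∉ F2)
    (v : G.V) (hv1 : v ∉ S1) (hv2 : v ∉ S2)
    (t1 : Fin 4 → G.V) (ht1inj : Function.Injective t1)
    (ht1 : ∀ i, t1 i ∈ S1) (hm1 : ∀ i, G.mult v (t1 i) = 1)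
    (g1 : Fin 4 → G.E) (hg1inj : Function.Injective g1)
    (hg1 : ∀ i, G.ends (g1 i) = s(v, t1 i))
    (t2 : Fin 4 → G.V) (ht2inj : Function.Injective t2)
    (ht2 : ∀ i, t2 i ∈ S2) (hm2 : ∀ i, G.mult v (t2 i) = 1)
    (g2 : Fin 4 → G.E) (hg2inj : Function.Injective g2)
    (hg2 : ∀ i, G.ends (g2 i) = s(v, t2 i)) :
    Immerses K33 G := by
  classical
  have hF1 := hC1.2.1
  have hF2 := hC2.2.1
  obtain ⟨q1, hq1, q2, hq2, Q, hQ, hQd⟩ := exists_link h2c hF1 hF2 hp1 hp2 hv1 hv2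
  have hF : Disjoint F1 F2 := by
    rw [Finset.disjoint_left]
    intro e he1 he2
    obtain ⟨x, hx⟩ : ∃ x, x ∈ G.ends e := ⟨_, Sym2.out_fst_mem _⟩
    exact Finset.disjoint_left.1 hSdisj (hF1 e he1 x hx) (hF2 e he2 x hx)
  have hw1 : ∀ e ∈ F1, v ∉ G.ends e := fun e he h => hv1 (hF1 e he v h)
  have hw2 : ∀ e ∈ F2, v ∉ G.ends e := fun e he h => hv2 (hF2 e he v h)
  have hL1 : [t1 0, t1 1, t1 2, t1 3].Nodup := by simp [ht1inj.eq_iff]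
  have hL2 : [t2 0, t2 1, t2 2, t2 3].Nodup := by simp [ht2inj.eq_iff]
  have hL3 : [t2 0, t2 1, t2 2].Nodup := by simp [ht2inj.eq_iff]
  have hS1 : ∀ x ∈ [t1 0, t1 1, t1 2, t1 3], x ∈ S1 := by simp [ht1]
  have hS2 : ∀ x ∈ [t2 0, t2 1, t2 2, t2 3], x ∈ S2 := by simp [ht2]
  have he1 : ∀ i, ∃ e, G.ends e = s(v, t1 i) := fun i => ⟨_, hg1 i⟩
  have he2 : ∀ i, ∃ e, G.ends e = s(v, t2 i) := fun i => ⟨_, hg2 i⟩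
  have hE1 : ∀ x ∈ [t1 0, t1 1, t1 2, t1 3], ∃ e, G.ends e = s(v, x) := by simp [he1]
  have hE2 : ∀ x ∈ [t2 0, t2 1, t2 2, t2 3], ∃ e, G.ends e = s(v, x) := by simp [he2]
  obtain h | h := side hC1 hL1 ht1 hq1
  · exact case_mid hSdisj hF hF1 hF2 hv1 hv2 hw1 hw2 hQd hQ hq1 hq2 hL1 hS1 hE1 hL2 hS2 hE2 h
      (side hC2 hL2 ht2 hq2)
  · exact case_end hSdisj hF hF1 hv1 hv2 hw1 hw2 hQd hQ hq1 hL1 hS1 hE1 hL3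
      (by intro x hx; simp only [List.mem_cons] at hx ⊢; tauto) hS2 hE2 h
      (star hC2 hq2 (ht2 0) (ht2 1) (ht2 2))
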